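/- Let r > 0, φ ∈ [0,π/2], and set λ = (1/2) tanh(r/2). Then for all x ∈ ℝ, det(M'(r,φ) M(r,φ)^{-1} − x I₃) = −x³ + (3λ + 1/(4λ)) x² − (1/2)(6λ² + 1) x + (16λ⁴ + 16λ² − 1 + (4λ² − 1)² cos 2φ) / (32λ), where M'(r,φ) is the entrywise derivative of M with respect to the first variable and I₃ is the 3×3 identity matrix. -/

import Mathlib

/- Context: `M(t,φ)` is the 3×3 block, corresponding to the vectors `Z, P̄ξ, F̄ξ`,
of the endomorphism `D(t)` built from Jacobi fields along a geodesic normal to the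
submanifold `W_w` in `ℂH^n`, for a unit normal `ξ` of Kähler angle `φ`;
`M'(r,φ) M(r,φ)⁻¹` is the corresponding 3×3 block of the shape operator of the
tube of radius `r` around `W_w`, and the displayed cubic is the polynomial
`q_{r,ξ}` whose roots, together with `λ` and `1/(4λ)`, are the principal
curvatures of the tube. -/

open Real

noncomputable section

/-- The 3×3 block `M(t,φ)` (in the basis `Z, P̄ξ, F̄ξ`) of the endomorphism `D(t)`
built from Jacobi fields along a geodesic normal to `W_w` in `ℂH^n`, for a unit
normal `ξ` of Kähler angle `φ`; the columns are the Jacobi fields `ζ_Z`,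
`ζ_{P̄ξ}`, `ζ_{F̄ξ}`. -/
def M (t φ : ℝ) : Matrix (Fin 3) (Fin 3) ℝ :=
  Matrix.of
    ![![cosh (t / 2),
        -(sin φ * sinh (t / 2)),
        0],
      ![-(sin φ * (cos φ ^ 2 + sin φ ^ 2 * cosh (t / 2)) * sinh (t / 2)),
        cos φ ^ 2 * cosh (t / 2) + sin φ ^ 2 * cosh t,
        2 * sin φ * cos φ * (cosh (t / 2) - 1) * sinh (t / 2)],
      ![-(cos φ * sin φ ^ 2 * (cosh (t / 2) - 1) * sinh (t / 2)),
        -(sin φ * cos φ * (cosh (t / 2) - cosh t)),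
        2 * (1 + cos φ ^ 2 * (cosh (t / 2) - 1)) * sinh (t / 2)]]

/-- The entrywise derivative `M'(r,φ)` of `M` with respect to the first variable. -/
def M' (r φ : ℝ) : Matrix (Fin 3) (Fin 3) ℝ :=
  Matrix.of fun i j => deriv (fun t => M t φ i j) r

/-!
The normal Jacobi fields along a geodesic with velocity `ξ` split into a component along `Jξ`,
which solves `f'' = f`, and components orthogonal to it, which solve `f'' = f / 4`. Expressed in
the parallel frame `Z`, `Jξ = sin φ P̄ξ + cos φ F̄ξ`, `-cos φ P̄ξ + sin φ F̄ξ`, the matrix `M` is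
therefore linear in `(cosh (t / 2), sinh (t / 2), cosh t, sinh t)`, and the pencil `M' - x M` has
the same shape with other coefficients. A single `3 × 3` determinant gives both `det M` and
`det (M' - x M)`, and the characteristic polynomial is their quotient.
-/

lemma det_mul_inv_sub_smul_one_mul_det {n R : Type*} [Fintype n] [DecidableEq n] [CommRing R]
    (A B : Matrix n n R) (hB : IsUnit B.det) (x : R) :
    (A * B⁻¹ - x • (1 : Matrix n n R)).det * B.det = (A - x • B).det := by
  rw [← Matrix.det_mul, sub_mul, Matrix.nonsing_inv_mul_cancel_right _ _ hB, smul_mul_assoc,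
    one_mul]

lemma hasDerivAt_const_matrix_mul_apply {l m n 𝕜 : Type*} [Fintype m]
    [NontriviallyNormedField 𝕜] (A : Matrix l m 𝕜) {B : 𝕜 → Matrix m n 𝕜} {B' : Matrix m n 𝕜}
    {t : 𝕜} {j : n} (hB : ∀ k, HasDerivAt (fun u => B u k j) (B' k j) t) (i : l) :
    HasDerivAt (fun u => (A * B u) i j) ((A * B') i j) t :=
  HasDerivAt.fun_sum fun k _ => (hB k).const_mul (A i k)

/-- The change of basis from the frame `Z`, `Jξ`, `-cos φ P̄ξ + sin φ F̄ξ`, adapted to the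
eigenspaces of the Jacobi operator of `ξ`, to the frame `Z`, `P̄ξ`, `F̄ξ`. -/
def adaptedFrame (φ : ℝ) : Matrix (Fin 3) (Fin 3) ℝ :=
  !![1, 0, 0;
     0, sin φ, -cos φ;
     0, cos φ, sin φ]

/-- The common shape of `M`, `M'` and `M' - x M` in the adapted frame, with the Jacobi fields
`ζ_Z`, `ζ_{P̄ξ}`, `ζ_{F̄ξ}` as columns. For `M` the arguments `(a, b, p, q)` are
`(cosh (t / 2), sinh (t / 2), cosh t, sinh t)`; since the entries are linear in them, for `M'` and
`M' - x M` they are the images of these four functions under `d/dt` and `d/dt - x`. -/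
def adaptedBlock (φ a b p q : ℝ) : Matrix (Fin 3) (Fin 3) ℝ :=
  !![a, -(sin φ * b), 0;
     -(sin φ ^ 2 / 2 * q), sin φ * p, cos φ * q;
     sin φ * cos φ * b, -(cos φ * a), 2 * sin φ * b]

lemma det_adaptedFrame (φ : ℝ) : (adaptedFrame φ).det = 1 := by
  simp only [adaptedFrame, Matrix.det_fin_three, Matrix.of_apply, Matrix.cons_val]
  linear_combination sin_sq_add_cos_sq φ

lemma det_adaptedBlock (φ a b p q : ℝ) :
    (adaptedBlock φ a b p q).det
      = cos φ ^ 2 * (a ^ 2 * q) + sin φ ^ 2 * (b * (2 * a * p - b * q)) := by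
  simp only [adaptedBlock, Matrix.det_fin_three, Matrix.of_apply, Matrix.cons_val]
  linear_combination -(sin φ ^ 2 * b ^ 2 * q) * sin_sq_add_cos_sq φ

lemma adaptedBlock_sub_smul (φ x a b p q a' b' p' q' : ℝ) :
    adaptedBlock φ a' b' p' q' - x • adaptedBlock φ a b p q
      = adaptedBlock φ (a' - x * a) (b' - x * b) (p' - x * p) (q' - x * q) := by
  ext i j
  fin_cases i <;> fin_cases j <;>
    simp only [adaptedBlock, Matrix.sub_apply, Matrix.smul_apply, smul_eq_mul, Matrix.of_apply,
      Matrix.cons_val, Fin.zero_eta, Fin.mk_one, Fin.reduceFinMk] <;>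
    ring

lemma hasDerivAt_adaptedBlock_apply (φ : ℝ) {a b p q : ℝ → ℝ} {a' b' p' q' t : ℝ}
    (ha : HasDerivAt a a' t) (hb : HasDerivAt b b' t) (hp : HasDerivAt p p' t)
    (hq : HasDerivAt q q' t) (i j : Fin 3) :
    HasDerivAt (fun u => adaptedBlock φ (a u) (b u) (p u) (q u) i j)
      (adaptedBlock φ a' b' p' q' i j) t := by
  fin_cases i <;> fin_cases j
  exacts [ha, (hb.const_mul _).neg, hasDerivAt_const _ _,
    (hq.const_mul _).neg, hp.const_mul _, hq.const_mul _,
    hb.const_mul _, (ha.const_mul _).neg, hb.const_mul _]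

lemma cosh_eq_cosh_half_sq_add_sinh_half_sq (t : ℝ) :
    cosh t = cosh (t / 2) ^ 2 + sinh (t / 2) ^ 2 := by
  rw [← cosh_two_mul, mul_div_cancel₀ t two_ne_zero]

lemma sinh_eq_two_mul_sinh_half_mul_cosh_half (t : ℝ) :
    sinh t = 2 * sinh (t / 2) * cosh (t / 2) := by
  rw [← sinh_two_mul, mul_div_cancel₀ t two_ne_zero]

lemma M_eq_adaptedFrame_mul_adaptedBlock (t φ : ℝ) :
    M t φ = adaptedFrame φ * adaptedBlock φ (cosh (t / 2)) (sinh (t / 2)) (cosh t) (sinh t) := by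
  rw [sinh_eq_two_mul_sinh_half_mul_cosh_half t]
  ext i j
  fin_cases i <;> fin_cases j <;>
    simp only [M, adaptedFrame, adaptedBlock, Matrix.mul_apply, Fin.sum_univ_three,
      Matrix.of_apply, Matrix.cons_val, Fin.zero_eta, Fin.mk_one, Fin.reduceFinMk] <;>
    grind [sin_sq_add_cos_sq]

lemma M'_eq_adaptedFrame_mul_adaptedBlock (t φ : ℝ) :
    M' t φ
      = adaptedFrame φ
        * adaptedBlock φ (sinh (t / 2) / 2) (cosh (t / 2) / 2) (sinh t) (cosh t) := by
  have half : HasDerivAt (fun u : ℝ => u / 2) (1 / 2) t := (hasDerivAt_id t).div_const 2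
  have hcosh : HasDerivAt (fun u : ℝ => cosh (u / 2)) (sinh (t / 2) / 2) t :=
    half.cosh.congr_deriv (mul_one_div _ _)
  have hsinh : HasDerivAt (fun u : ℝ => sinh (u / 2)) (cosh (t / 2) / 2) t :=
    half.sinh.congr_deriv (mul_one_div _ _)
  ext i j
  simp only [M', Matrix.of_apply, M_eq_adaptedFrame_mul_adaptedBlock]
  exact (hasDerivAt_const_matrix_mul_apply _ (fun k => hasDerivAt_adaptedBlock_apply φ hcosh hsinh
    (hasDerivAt_cosh t) (hasDerivAt_sinh t) k j) i).deriv

lemma det_M (t φ : ℝ) : (M t φ).det = 2 * cosh (t / 2) ^ 3 * sinh (t / 2) := by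
  rw [M_eq_adaptedFrame_mul_adaptedBlock, Matrix.det_mul, det_adaptedFrame, det_adaptedBlock,
    cosh_eq_cosh_half_sq_add_sinh_half_sq t, sinh_eq_two_mul_sinh_half_mul_cosh_half t]
  linear_combination 2 * cosh (t / 2) ^ 3 * sinh (t / 2) * sin_sq_add_cos_sq φ

lemma det_M'_sub_smul_M (t φ x : ℝ) :
    (M' t φ - x • M t φ).det
      = cos φ ^ 2
          * ((sinh (t / 2) / 2 - x * cosh (t / 2)) ^ 2 * (cosh t - x * sinh t))
        + sin φ ^ 2
          * ((cosh (t / 2) / 2 - x * sinh (t / 2))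
            * (2 * (sinh (t / 2) / 2 - x * cosh (t / 2)) * (sinh t - x * cosh t)
              - (cosh (t / 2) / 2 - x * sinh (t / 2)) * (cosh t - x * sinh t))) := by
  rw [M'_eq_adaptedFrame_mul_adaptedBlock, M_eq_adaptedFrame_mul_adaptedBlock,
    ← Matrix.mul_smul, ← mul_sub, adaptedBlock_sub_smul, Matrix.det_mul, det_adaptedFrame,
    det_adaptedBlock, one_mul]

theorem char_poly_block_general (r : ℝ) (hr : r ≠ 0) (φ lam : ℝ)
    (hlam : lam = 2⁻¹ * tanh (r / 2)) (x : ℝ) :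
    (M' r φ * (M r φ)⁻¹ - x • (1 : Matrix (Fin 3) (Fin 3) ℝ)).det
      = -x ^ 3 + (3 * lam + 1 / (4 * lam)) * x ^ 2
          - 2⁻¹ * (6 * lam ^ 2 + 1) * x
          + (16 * lam ^ 4 + 16 * lam ^ 2 - 1
              + (4 * lam ^ 2 - 1) ^ 2 * cos (2 * φ)) / (32 * lam) := by
  have hcosh : cosh (r / 2) ≠ 0 := (cosh_pos _).ne'
  have hsinh : sinh (r / 2) ≠ 0 := sinh_ne_zero.2 (div_ne_zero hr two_ne_zero)
  have hdet : (M r φ).det ≠ 0 := by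
    rw [det_M]
    positivity
  apply mul_right_cancel₀ hdet
  rw [det_mul_inv_sub_smul_one_mul_det _ _ hdet.isUnit, det_M'_sub_smul_M, det_M, hlam,
    tanh_eq_sinh_div_cosh, cosh_eq_cosh_half_sq_add_sinh_half_sq r,
    sinh_eq_two_mul_sinh_half_mul_cosh_half r, cos_two_mul, sin_sq]
  field_simp
  ring

/-- for `r > 0`, `φ ∈ [0,π/2]` and `λ = (1/2)tanh(r/2)`, for all
`x ∈ ℝ`,
`det(M'(r,φ) M(r,φ)⁻¹ − x I₃) = −x³ + (3λ + 1/(4λ))x² − (1/2)(6λ² + 1)x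
  + (16λ⁴ + 16λ² − 1 + (4λ² − 1)² cos 2φ)/(32λ)`. -/
theorem char_poly_block (r : ℝ) (hr : 0 < r) (φ : ℝ) (hφ : φ ∈ Set.Icc 0 (π / 2))
    (lam : ℝ) (hlam : lam = 2⁻¹ * tanh (r / 2)) :
    ∀ x : ℝ,
      (M' r φ * (M r φ)⁻¹ - x • (1 : Matrix (Fin 3) (Fin 3) ℝ)).det
        = -x ^ 3 + (3 * lam + 1 / (4 * lam)) * x ^ 2
            - 2⁻¹ * (6 * lam ^ 2 + 1) * x
            + (16 * lam ^ 4 + 16 * lam ^ 2 - 1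
                + (4 * lam ^ 2 - 1) ^ 2 * cos (2 * φ)) / (32 * lam) := by
  exact char_poly_block_general r hr.ne' φ lam hlam
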